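/- Let Ω ⊂ ℝ^N be open and bounded, let (ε_k) be positive with ε_k → 0, and let u_k : ℝ^N → ℝ be of class C¹. Let λ be a finite Borel measure on Ω and ρ : Ω → ℝ^N Borel with |ρ| = 1 λ-a.e. Assume: (i) for every bounded continuous φ : Ω → ℝ and all i, j, ∫_Ω ε_k ∂u_k/∂x_i ∂u_k/∂x_j φ dx → ∫_Ω ρ_i ρ_j φ dλ; and (ii) ∫_Ω | ε_k|∇u_k|² − (1 − u_k²)²/ε_k | dx → 0. Let η : ℝ^N → ℝ^N be bounded C³ with bounded derivatives and set Z := (η·∇)η. Then ∫_Ω { ( ε_k|∇u_k|²/2 + (1 − u_k²)²/(2ε_k) ) ( div Z + (div η)² − trace((∇η)²) ) − 2 ε_k (∇u_k, ∇u_k·∇η) div η − 2 ε_k (∇u_k, (1/2)∇u_k·∇Z − ∇u_k·(∇η)²) + ε_k |∇u_k·∇η|² } dx → ∫_Ω { div Z + (div η)² − trace((∇η)²) − 2(ρ, ρ·∇η) div η − 2(ρ, (1/2)ρ·∇Z − ρ·(∇η)²) + |ρ·∇η|² } dλ as k → ∞, where for a vector v the covector v·∇η has j-th component Σ_i v_i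 ∂η^i/∂x_j, v·∇Z has j-th component Σ_i v_i ∂Z^i/∂x_j, and v·(∇η)² has k-th component Σ_{i,j} v_i ∂η^i/∂x_j ∂η^j/∂x_k. -/

import Mathlib

/-!
Pointwise, the integrand is a quadratic form in `∇u_k` plus an error proportional to the
discrepancy `ε_k |∇u_k|² - (1 - u_k²)² / ε_k`: equipartition lets the energy density be replaced by
`ε_k |∇u_k|²`. Both the matrix of the quadratic form and the factor multiplying the discrepancy
depend only on `∇η` and `∇Z`, so they are continuous, and bounded on `Ω`. The error therefore tends
to zero in `L¹`, and the quadratic part converges entry by entry by the assumed convergence of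
`ε_k ∇u_k ⊗ ∇u_k`. Since `|ρ| = 1`, the limit integrand is exactly the same quadratic form at `ρ`.
-/

open Filter MeasureTheory Topology
open scoped RealInnerProductSpace

namespace PaperAC

/-- The partial derivative `∂f/∂x_j` of a scalar function on `ℝ^N`. -/
noncomputable def pdv {N : ℕ} (f : (Fin N → ℝ) → ℝ) (j : Fin N) (x : Fin N → ℝ) : ℝ :=
  fderiv ℝ f x (Pi.single j 1)

/-- The advection field `(η·∇)η`, with components `((η·∇)η)^i = ∑_j η^j ∂η^i/∂x_j`. -/
noncomputable def advf {N : ℕ} (η : (Fin N → ℝ) → (Fin N → ℝ)) (x : Fin N → ℝ) :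
    Fin N → ℝ :=
  fun i => ∑ j, η x j * pdv (fun z => η z i) j x

/-- The gradient `∇u` of a scalar function on `ℝ^N`. -/
noncomputable def grad {N : ℕ} (u : (Fin N → ℝ) → ℝ) (x : Fin N → ℝ) : Fin N → ℝ :=
  fun i => pdv u i x

/-- `X₀ := (D²u·η, η) + (∇u, 2(η·∇)η − ζ)`. -/
noncomputable def X0 {N : ℕ} (u : (Fin N → ℝ) → ℝ) (η ζ : (Fin N → ℝ) → (Fin N → ℝ))
    (y : Fin N → ℝ) : ℝ :=
  (∑ i, ∑ j, pdv (pdv u i) j y * η y i * η y j)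
    + ∑ i, pdv u i y * (2 * advf η y i - ζ y i)

/-- `−∇u·η`. -/
noncomputable def nGradDot {N : ℕ} (u : (Fin N → ℝ) → ℝ) (η : (Fin N → ℝ) → (Fin N → ℝ))
    (x : Fin N → ℝ) : ℝ :=
  -(∑ i, pdv u i x * η x i)

/-- `F_z`, the partial derivative of `F = F(z,p)` in the scalar variable. -/
noncomputable def Fz {N : ℕ} (F : ℝ × (Fin N → ℝ) → ℝ) (z : ℝ) (p : Fin N → ℝ) : ℝ :=
  fderiv ℝ F (z, p) (1, 0)

/-- `F_{p_i}`. -/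
noncomputable def Fp {N : ℕ} (F : ℝ × (Fin N → ℝ) → ℝ) (i : Fin N) (z : ℝ) (p : Fin N → ℝ) :
    ℝ :=
  fderiv ℝ F (z, p) (0, Pi.single i 1)

/-- `F_{zz}`. -/
noncomputable def Fzz {N : ℕ} (F : ℝ × (Fin N → ℝ) → ℝ) (z : ℝ) (p : Fin N → ℝ) : ℝ :=
  fderiv ℝ (fun q => fderiv ℝ F q (1, 0)) (z, p) (1, 0)

/-- `F_{z p_i}`. -/
noncomputable def Fzp {N : ℕ} (F : ℝ × (Fin N → ℝ) → ℝ) (i : Fin N) (z : ℝ) (p : Fin N → ℝ) :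
    ℝ :=
  fderiv ℝ (fun q => fderiv ℝ F q ((0 : ℝ), Pi.single i 1)) (z, p) (1, 0)

/-- `F_{p_i p_j}`. -/
noncomputable def Fpp {N : ℕ} (F : ℝ × (Fin N → ℝ) → ℝ) (i j : Fin N) (z : ℝ)
    (p : Fin N → ℝ) : ℝ :=
  fderiv ℝ (fun q => fderiv ℝ F q ((0 : ℝ), Pi.single j 1)) (z, p) ((0 : ℝ), Pi.single i 1)

/-- `𝔄₁(t) = A(u ∘ Φ_t⁻¹) = ∫_Ω F(u_t, ∇u_t)`, the inner deformation of the functional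
`A(w) := ∫_Ω F(w, ∇w)`. -/
noncomputable def innerA {N : ℕ} (Ω : Set (Fin N → ℝ)) (F : ℝ × (Fin N → ℝ) → ℝ)
    (u : (Fin N → ℝ) → ℝ) (Φ : ℝ → (Fin N → ℝ) → (Fin N → ℝ)) (t : ℝ) : ℝ :=
  ∫ y in Ω, F (u (Function.invFun (Φ t) y),
      grad (fun z => u (Function.invFun (Φ t) z)) y)

/-- `t ↦ A(u + tφ) = ∫_Ω F(u + tφ, ∇u + t∇φ)`, the outer deformation of the functional
`A(w) := ∫_Ω F(w, ∇w)`. -/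
noncomputable def gateauxA {N : ℕ} (Ω : Set (Fin N → ℝ)) (F : ℝ × (Fin N → ℝ) → ℝ)
    (u φ : (Fin N → ℝ) → ℝ) (t : ℝ) : ℝ :=
  ∫ x in Ω, F (u x + t * φ x, fun i => pdv u i x + t * pdv φ i x)

/-- The matrix `M_t(x)` with entries `δ_{ij} + t ∂η^i/∂x_j + (t²/2) ∂W^i/∂x_j`. -/
noncomputable def defMat {N : ℕ} (η W : (Fin N → ℝ) → (Fin N → ℝ)) (t : ℝ)
    (x : Fin N → ℝ) : Matrix (Fin N) (Fin N) ℝ :=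
  Matrix.of fun i j =>
    (if i = j then (1 : ℝ) else 0) + t * pdv (fun z => η z i) j x
      + (t ^ 2 / 2) * pdv (fun z => W z i) j x

/-- `Φ(a) := ∫_0^a |s² − 1| ds`. -/
noncomputable def PhiAC (a : ℝ) : ℝ := ∫ s in (0 : ℝ)..a, |s ^ 2 - 1|

/-- All partial derivatives (= iterated Fréchet derivatives) of `f` up to order `n` are
bounded; the case `i = 0` says `f` itself is bounded. -/
def BddUpTo {N : ℕ} {E : Type*} [NormedAddCommGroup E] [NormedSpace ℝ E]
    (n : ℕ) (f : (Fin N → ℝ) → E) : Prop :=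
  ∀ i : ℕ, i ≤ n → ∃ C : ℝ, ∀ x, ‖iteratedFDeriv ℝ i f x‖ ≤ C

open scoped Matrix

section Algebra

variable {X n : Type*} [TopologicalSpace X] [Fintype n]

theorem dotProduct_mulVec_eq_sum {R m : Type*} [CommSemiring R] [Fintype m] (v : m → R)
    (M : Matrix m n R) (w : n → R) : v ⬝ᵥ M *ᵥ w = ∑ i, ∑ j, v i * w j * M i j := by
  simp only [dotProduct, Matrix.mulVec, Finset.mul_sum]
  exact Finset.sum_congr rfl fun i _ => Finset.sum_congr rfl fun j _ => by ring

theorem abs_le_one_of_sum_sq_eq_one {v : n → ℝ} (hv : ∑ i, v i ^ 2 = 1) (i : n) : |v i| ≤ 1 := by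
  rw [← sq_le_one_iff_abs_le_one, ← hv]
  exact Finset.single_le_sum (f := fun i => v i ^ 2) (fun _ _ => sq_nonneg _) (Finset.mem_univ i)

/-- Twice the second-order coefficient in `t` of `det (1 + t A + (t² / 2) B)`; for `A = ∇η` and
`B = ∇ζ` it is `div ζ + (div η)² - trace ((∇η)²)`. -/
def secondVolumeVariation (A B : Matrix n n ℝ) : ℝ :=
  B.trace + A.trace ^ 2 - (A * A).trace

theorem continuous_secondVolumeVariation {A B : X → Matrix n n ℝ} (hA : Continuous A)
    (hB : Continuous B) : Continuous fun x => secondVolumeVariation (A x) (B x) := by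
  unfold secondVolumeVariation
  fun_prop

/-- The integrand of the second inner variation, as a function of the velocity gradient `A = ∇η`,
the acceleration gradient `B = ∇ζ`, the energy density `w`, the weight `e` and the vector `v`. The
Allen–Cahn integrand has `e = ε` and `v = ∇u`, the limit integrand has `w = e = 1` and `v = ρ`. -/
noncomputable def secondVariationDensity (A B : Matrix n n ℝ) (w e : ℝ) (v : n → ℝ) : ℝ :=
  w * secondVolumeVariation A B
    - 2 * e * (v ⬝ᵥ v ᵥ* A) * A.trace
    - 2 * e * (v ⬝ᵥ ((1 / 2 : ℝ) • v ᵥ* B - v ᵥ* (A * A)))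
    + e * (v ᵥ* A ⬝ᵥ v ᵥ* A)

theorem secondVariationDensity_eq_sum (A B : Matrix n n ℝ) (w e : ℝ) (v : n → ℝ) :
    secondVariationDensity A B w e v =
      w * ((∑ i, B i i) + (∑ i, A i i) ^ 2 - ∑ i, ∑ j, A i j * A j i)
        - 2 * e * (∑ j, v j * (∑ i, v i * A i j)) * (∑ i, A i i)
        - 2 * e * (∑ c, v c * ((1 / 2) * (∑ i, v i * B i c) - ∑ i, ∑ j, v i * A i j * A j c))
        + e * ∑ j, (∑ i, v i * A i j) ^ 2 := by
  simp only [secondVariationDensity, secondVolumeVariation, Matrix.trace, Matrix.diag,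
    Matrix.mul_apply, dotProduct, Matrix.vecMul, Pi.sub_apply, Pi.smul_apply, smul_eq_mul,
    Finset.mul_sum, mul_assoc, sq]

variable [DecidableEq n]

/-- The matrix of the quadratic form `v ↦ secondVariationDensity A B (v ⬝ᵥ v) 1 v`, to which the
density reduces under equipartition of energy. -/
noncomputable def secondVariationMatrix (A B : Matrix n n ℝ) : Matrix n n ℝ :=
  secondVolumeVariation A B • 1 - (2 * A.trace) • A - B + (2 : ℝ) • (A * A) + A * Aᵀ

theorem secondVariationDensity_eq_quadratic_add (A B : Matrix n n ℝ) (w e : ℝ) (v : n → ℝ) :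
    secondVariationDensity A B w e v =
      e * (v ⬝ᵥ secondVariationMatrix A B *ᵥ v)
        + (w - e * (v ⬝ᵥ v)) * secondVolumeVariation A B := by
  have quadratic_mul_transpose : v ⬝ᵥ (A * Aᵀ) *ᵥ v = v ᵥ* A ⬝ᵥ v ᵥ* A := by
    rw [← Matrix.mulVec_mulVec, Matrix.mulVec_transpose, Matrix.dotProduct_mulVec]
  simp only [secondVariationDensity, secondVariationMatrix, Matrix.add_mulVec, Matrix.sub_mulVec,
    Matrix.smul_mulVec, Matrix.one_mulVec, dotProduct_add, dotProduct_sub, dotProduct_smul,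
    smul_eq_mul, quadratic_mul_transpose, dotProduct_comm v (v ᵥ* _), ← Matrix.dotProduct_mulVec]
  ring

theorem continuous_secondVariationMatrix {A B : X → Matrix n n ℝ} (hA : Continuous A)
    (hB : Continuous B) : Continuous fun x => secondVariationMatrix (A x) (B x) := by
  have := continuous_secondVolumeVariation hA hB
  unfold secondVariationMatrix
  fun_prop

theorem secondVariationDensity_eq_quadratic_sub_discrepancy (A B : Matrix n n ℝ) {e : ℝ}
    (he : e ≠ 0) (V : ℝ) (v : n → ℝ) :
    secondVariationDensity A B (e * (∑ i, v i ^ 2) / 2 + V / (2 * e)) e v =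
      e * (v ⬝ᵥ secondVariationMatrix A B *ᵥ v)
        - (secondVolumeVariation A B / 2) • (e * (∑ i, v i ^ 2) - V / e) := by
  simp only [secondVariationDensity_eq_quadratic_add, dotProduct, ← sq, smul_eq_mul]
  field_simp
  ring

theorem secondVariationDensity_of_sum_sq_eq_one (A B : Matrix n n ℝ) {v : n → ℝ}
    (hv : ∑ i, v i ^ 2 = 1) :
    secondVariationDensity A B 1 1 v = v ⬝ᵥ secondVariationMatrix A B *ᵥ v := by
  simp [secondVariationDensity_eq_quadratic_add, dotProduct, ← sq, hv]

end Algebra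

section Integration

variable {X E κ : Type*} [NormedAddCommGroup E]

theorem exists_norm_le_of_continuous_of_isBounded [PseudoMetricSpace X] [ProperSpace X]
    {s : Set X} {f : X → E} (hf : Continuous f) (hs : Bornology.IsBounded s) :
    ∃ C : ℝ, ∀ x ∈ s, ‖f x‖ ≤ C := by
  obtain ⟨C, hC⟩ := hs.isCompact_closure.exists_bound_of_continuousOn hf.continuousOn
  exact ⟨C, fun x hx => hC x (subset_closure hx)⟩

variable [MeasurableSpace X] {μ ν : Measure X} {l : Filter κ}

theorem integrableOn_of_continuous_of_isBounded [PseudoMetricSpace X] [ProperSpace X]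
    [OpensMeasurableSpace X] [IsFiniteMeasureOnCompacts μ]
    {s : Set X} {f : X → E} (hf : Continuous f) (hs : Bornology.IsBounded s) :
    IntegrableOn f s μ :=
  (hf.continuousOn.integrableOn_compact' hs.isCompact_closure
    isClosed_closure.measurableSet).mono_set subset_closure

theorem exists_ae_restrict_norm_le [PseudoMetricSpace X] [ProperSpace X]
    [OpensMeasurableSpace X] (μ : Measure X) {s : Set X} {f : X → E} (hf : Continuous f)
    (hs : Bornology.IsBounded s) : ∃ C : ℝ, ∀ᵐ x ∂μ.restrict s, ‖f x‖ ≤ C := by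
  obtain ⟨C, hC⟩ := exists_norm_le_of_continuous_of_isBounded hf hs.closure
  exact ⟨C, ae_restrict_of_ae_restrict_of_subset subset_closure
    ((ae_restrict_mem isClosed_closure.measurableSet).mono hC)⟩

variable [NormedSpace ℝ E]

theorem tendsto_integral_finsetSum {ι : Type*} (s : Finset ι) {f : κ → ι → X → E}
    {g : ι → X → E} (hf : ∀ k, ∀ i ∈ s, Integrable (f k i) μ) (hg : ∀ i ∈ s, Integrable (g i) ν)
    (hfg : ∀ i ∈ s, Tendsto (fun k => ∫ x, f k i x ∂μ) l (𝓝 (∫ x, g i x ∂ν))) :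
    Tendsto (fun k => ∫ x, ∑ i ∈ s, f k i x ∂μ) l (𝓝 (∫ x, ∑ i ∈ s, g i x ∂ν)) := by
  simpa only [integral_finsetSum s (hf _), integral_finsetSum s hg] using tendsto_finsetSum s hfg

theorem tendsto_integral_smul_zero {f : κ → X → E} {φ : X → ℝ} {C : ℝ}
    (hf : ∀ k, Integrable (f k) μ) (hφ : ∀ᵐ x ∂μ, ‖φ x‖ ≤ C)
    (hf0 : Tendsto (fun k => ∫ x, ‖f k x‖ ∂μ) l (𝓝 0)) :
    Tendsto (fun k => ∫ x, φ x • f k x ∂μ) l (𝓝 0) := by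
  refine squeeze_zero_norm (fun k => ?_) (by simpa using hf0.const_mul C)
  rw [← integral_const_mul]
  refine norm_integral_le_of_norm_le ((hf k).norm.const_mul C) ?_
  filter_upwards [hφ] with x hx
  rw [norm_smul]
  gcongr

theorem tendsto_integral_sub_smul {f g : κ → X → E} {φ : X → ℝ} {C : ℝ} {a : E}
    (hf : ∀ k, Integrable (f k) μ) (hg : ∀ k, Integrable (g k) μ)
    (hφm : AEStronglyMeasurable φ μ) (hφ : ∀ᵐ x ∂μ, ‖φ x‖ ≤ C)
    (hfa : Tendsto (fun k => ∫ x, f k x ∂μ) l (𝓝 a))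
    (hg0 : Tendsto (fun k => ∫ x, ‖g k x‖ ∂μ) l (𝓝 0)) :
    Tendsto (fun k => ∫ x, (f k x - φ x • g k x) ∂μ) l (𝓝 a) := by
  have integral_eq k : ∫ x, (f k x - φ x • g k x) ∂μ = ∫ x, f k x ∂μ - ∫ x, φ x • g k x ∂μ :=
    integral_sub (hf k) ((hg k).bdd_smul C hφm hφ)
  simpa only [integral_eq, sub_zero] using hfa.sub (tendsto_integral_smul_zero hg hφ hg0)

theorem tendsto_integral_mul_dotProduct_mulVec {n : Type*} [Fintype n] {M : X → Matrix n n ℝ}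
    {e : κ → ℝ} {v : κ → X → n → ℝ} {ρ : X → n → ℝ}
    (hv : ∀ k i j, Integrable (fun x => e k * v k x i * v k x j * M x i j) μ)
    (hρ : ∀ i j, Integrable (fun x => ρ x i * ρ x j * M x i j) ν)
    (hlim : ∀ i j, Tendsto (fun k => ∫ x, e k * v k x i * v k x j * M x i j ∂μ) l
      (𝓝 (∫ x, ρ x i * ρ x j * M x i j ∂ν))) :
    Tendsto (fun k => ∫ x, e k * (v k x ⬝ᵥ M x *ᵥ v k x) ∂μ) l
      (𝓝 (∫ x, ρ x ⬝ᵥ M x *ᵥ ρ x ∂ν)) := by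
  simp only [dotProduct_mulVec_eq_sum, Finset.mul_sum, ← mul_assoc]
  exact tendsto_integral_finsetSum _
    (fun k i _ => integrable_finsetSum _ fun j _ => hv k i j)
    (fun i _ => integrable_finsetSum _ fun j _ => hρ i j)
    fun i _ => tendsto_integral_finsetSum _ (fun k j _ => hv k i j) (fun j _ => hρ i j)
      fun j _ => hlim i j

theorem integrable_mul_mul_of_sum_sq_eq_one {n : Type*} [Fintype n] {ρ : X → n → ℝ} {φ : X → ℝ}
    (hρm : AEStronglyMeasurable ρ μ) (hρ1 : ∀ᵐ x ∂μ, ∑ i, ρ x i ^ 2 = 1)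
    (hφ : Integrable φ μ) (i j : n) : Integrable (fun x => ρ x i * ρ x j * φ x) μ := by
  have hρi (i : n) : AEStronglyMeasurable (fun x => ρ x i) μ :=
    (continuous_apply i).comp_aestronglyMeasurable hρm
  refine hφ.bdd_mul (c := 1) ((hρi i).mul (hρi j)) ?_
  filter_upwards [hρ1] with x hx
  rw [norm_mul]
  exact mul_le_one₀ (abs_le_one_of_sum_sq_eq_one hx i) (norm_nonneg _)
    (abs_le_one_of_sum_sq_eq_one hx j)

theorem tendsto_setIntegral_mul_dotProduct_mulVec {n : Type*} [Fintype n]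
    [PseudoMetricSpace X] [ProperSpace X] [OpensMeasurableSpace X]
    [IsFiniteMeasureOnCompacts μ] [IsFiniteMeasureOnCompacts ν] {s : Set X}
    (hs : Bornology.IsBounded s) {M : X → Matrix n n ℝ} (hM : Continuous M) {e : κ → ℝ}
    {v : κ → X → n → ℝ} (hv : ∀ k, Continuous (v k)) {ρ : X → n → ℝ}
    (hρm : AEStronglyMeasurable ρ (ν.restrict s)) (hρ1 : ∀ᵐ x ∂ν.restrict s, ∑ i, ρ x i ^ 2 = 1)
    (hlim : ∀ i j, Tendsto (fun k => ∫ x in s, e k * v k x i * v k x j * M x i j ∂μ) l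
      (𝓝 (∫ x in s, ρ x i * ρ x j * M x i j ∂ν))) :
    Tendsto (fun k => ∫ x in s, e k * (v k x ⬝ᵥ M x *ᵥ v k x) ∂μ) l
      (𝓝 (∫ x in s, ρ x ⬝ᵥ M x *ᵥ ρ x ∂ν)) := by
  have hMij := hM.matrix_elem
  refine tendsto_integral_mul_dotProduct_mulVec (fun k i j => ?_) (fun i j => ?_) hlim
  · exact integrableOn_of_continuous_of_isBounded (by fun_prop) hs
  · exact integrable_mul_mul_of_sum_sq_eq_one hρm hρ1
      (integrableOn_of_continuous_of_isBounded (hMij i j) hs) i j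

end Integration

section VectorFields

variable {N : ℕ} {m n : WithTop ℕ∞}

theorem contDiff_pdv {f : (Fin N → ℝ) → ℝ} (hf : ContDiff ℝ n f) (hmn : m + 1 ≤ n) (j : Fin N) :
    ContDiff ℝ m (pdv f j) :=
  (hf.fderiv_right hmn).clm_apply contDiff_const

theorem continuous_grad {f : (Fin N → ℝ) → ℝ} (hf : ContDiff ℝ 1 f) : Continuous (grad f) :=
  continuous_pi fun i => (contDiff_pdv (m := 0) hf (by simp) i).continuous

/-- The Jacobian matrix `∇η`, with entries `∂η^i/∂x_j` in row `i` and column `j`. The covector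
`v·∇η` is thus the row-vector product of `v` with this matrix. -/
noncomputable def jacobian (η : (Fin N → ℝ) → (Fin N → ℝ)) (x : Fin N → ℝ) :
    Matrix (Fin N) (Fin N) ℝ :=
  Matrix.of fun i j => pdv (fun z => η z i) j x

theorem continuous_jacobian {η : (Fin N → ℝ) → (Fin N → ℝ)} (hη : ContDiff ℝ 1 η) :
    Continuous (jacobian η) :=
  continuous_matrix fun i => continuous_pi_iff.1 (continuous_grad (contDiff_pi.1 hη i))

theorem contDiff_advf {η : (Fin N → ℝ) → (Fin N → ℝ)} (hη : ContDiff ℝ n η) (hmn : m + 1 ≤ n) :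
    ContDiff ℝ m (advf η) := by
  have hηi := contDiff_pi.1 hη
  exact contDiff_pi.2 fun i => ContDiff.sum fun j _ =>
    ((hηi j).of_le (le_self_add.trans hmn)).mul (contDiff_pdv (hηi i) hmn j)

end VectorFields

theorem second_inner_variation_allen_cahn_limit_general
    {κ : Type*} {l : Filter κ} {N : ℕ} {Ω : Set (Fin N → ℝ)} (hΩ : Bornology.IsBounded Ω)
    {W : ℝ → ℝ} (hW : Continuous W) {ε : κ → ℝ} (hε : ∀ k, ε k ≠ 0)
    {u : κ → (Fin N → ℝ) → ℝ} (hu : ∀ k, ContDiff ℝ 1 (u k))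
    {lam0 : Measure (Fin N → ℝ)} [IsFiniteMeasureOnCompacts lam0] {ρ : (Fin N → ℝ) → (Fin N → ℝ)}
    (hρm : AEStronglyMeasurable ρ (lam0.restrict Ω))
    (hρ1 : ∀ᵐ x ∂lam0.restrict Ω, ∑ i, ρ x i ^ 2 = 1)
    (hquad : ∀ φ : (Fin N → ℝ) → ℝ, Continuous φ → ∀ i j : Fin N,
      Tendsto (fun k => ∫ x in Ω, ε k * grad (u k) x i * grad (u k) x j * φ x) l
        (𝓝 (∫ x in Ω, ρ x i * ρ x j * φ x ∂lam0)))
    (hdiscr : Tendsto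
      (fun k => ∫ x in Ω, |ε k * (∑ i, grad (u k) x i ^ 2) - W (u k x) / ε k|) l (𝓝 0))
    {η ζ : (Fin N → ℝ) → (Fin N → ℝ)} (hη : ContDiff ℝ 1 η) (hζ : ContDiff ℝ 1 ζ) :
    Tendsto
      (fun k => ∫ x in Ω, secondVariationDensity (jacobian η x) (jacobian ζ x)
        (ε k * (∑ i, grad (u k) x i ^ 2) / 2 + W (u k x) / (2 * ε k)) (ε k) (grad (u k) x))
      l (𝓝 (∫ x in Ω, secondVariationDensity (jacobian η x) (jacobian ζ x) 1 1 (ρ x) ∂lam0)) := by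
  let J x := secondVolumeVariation (jacobian η x) (jacobian ζ x)
  let M x := secondVariationMatrix (jacobian η x) (jacobian ζ x)
  let Q k x := ε k * (grad (u k) x ⬝ᵥ M x *ᵥ grad (u k) x)
  let D k x := ε k * (∑ i, grad (u k) x i ^ 2) - W (u k x) / ε k
  have hJ : Continuous fun x => J x / 2 :=
    (continuous_secondVolumeVariation (continuous_jacobian hη) (continuous_jacobian hζ)).div_const 2
  have hM : Continuous M :=
    continuous_secondVariationMatrix (continuous_jacobian hη) (continuous_jacobian hζ)
  have hu' k : Continuous (u k) := (hu k).continuous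
  have hgrad k : Continuous (grad (u k)) := continuous_grad (hu k)
  have hQ k : IntegrableOn (Q k) Ω := integrableOn_of_continuous_of_isBounded (by fun_prop) hΩ
  have hD k : IntegrableOn (D k) Ω := integrableOn_of_continuous_of_isBounded (by fun_prop) hΩ
  have hQlim : Tendsto (fun k => ∫ x in Ω, Q k x) l (𝓝 (∫ x in Ω, ρ x ⬝ᵥ M x *ᵥ ρ x ∂lam0)) :=
    tendsto_setIntegral_mul_dotProduct_mulVec hΩ hM hgrad hρm hρ1 fun i j =>
      hquad _ (hM.matrix_elem i j) i j
  obtain ⟨C, hC⟩ := exists_ae_restrict_norm_le volume hJ hΩ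
  rw [integral_congr_ae (hρ1.mono fun _ hx => secondVariationDensity_of_sum_sq_eq_one _ _ hx)]
  simp only [secondVariationDensity_eq_quadratic_sub_discrepancy _ _ (hε _)]
  exact tendsto_integral_sub_smul hQ hD hJ.aestronglyMeasurable hC hQlim hdiscr

/-- Convergence of the second inner variation of the Allen–Cahn energy
with velocity `η` and acceleration `Z := (η·∇)η`: under the quadratic-convergence
hypothesis for `ε_k ∇u_k ⊗ ∇u_k` and vanishing of the discrepancy,
`δ²E_{ε_k}(u_k, η, Z)` converges to the corresponding expression with `ε_k ∇u_k ⊗ ∇u_k dx`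
replaced by `ρ ⊗ ρ dλ`. -/
theorem second_inner_variation_allen_cahn_limit
    (N : ℕ) (Ω : Set (Fin N → ℝ)) (hΩo : IsOpen Ω) (hΩb : Bornology.IsBounded Ω)
    (ε : ℕ → ℝ) (hε : ∀ k, 0 < ε k) (hε0 : Tendsto ε atTop (𝓝 0))
    (u : ℕ → (Fin N → ℝ) → ℝ) (hu : ∀ k, ContDiff ℝ 1 (u k))
    (lam0 : Measure (Fin N → ℝ)) [IsFiniteMeasure lam0]
    (ρ : (Fin N → ℝ) → (Fin N → ℝ)) (hρm : Measurable ρ)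
    (hρ1 : ∀ᵐ x ∂(lam0.restrict Ω), Real.sqrt (∑ i, ρ x i ^ 2) = 1)
    (hquad : ∀ φ : (Fin N → ℝ) → ℝ, ContinuousOn φ Ω → (∃ C : ℝ, ∀ x ∈ Ω, |φ x| ≤ C) →
      ∀ i j : Fin N,
        Tendsto (fun k => ∫ x in Ω, ε k * pdv (u k) i x * pdv (u k) j x * φ x) atTop
          (𝓝 (∫ x in Ω, ρ x i * ρ x j * φ x ∂lam0)))
    (hdiscr : Tendsto
      (fun k => ∫ x in Ω,
        |ε k * (∑ i, pdv (u k) i x ^ 2) - (1 - u k x ^ 2) ^ 2 / ε k|) atTop (𝓝 0))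
    (η : (Fin N → ℝ) → (Fin N → ℝ))
    (hη : ContDiff ℝ 3 η) (hηb : BddUpTo 3 η) :
    Tendsto
      (fun k => ∫ x in Ω,
        ((ε k * (∑ i, pdv (u k) i x ^ 2) / 2 + (1 - u k x ^ 2) ^ 2 / (2 * ε k))
            * ((∑ i, pdv (fun z => advf η z i) i x)
                + (∑ i, pdv (fun z => η z i) i x) ^ 2
                - ∑ i, ∑ j, pdv (fun z => η z i) j x * pdv (fun z => η z j) i x)
          - 2 * ε k * (∑ j, pdv (u k) j x
                * (∑ i, pdv (u k) i x * pdv (fun z => η z i) j x))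
              * (∑ i, pdv (fun z => η z i) i x)
          - 2 * ε k * (∑ c, pdv (u k) c x
                * ((1 / 2) * (∑ i, pdv (u k) i x * pdv (fun z => advf η z i) c x)
                    - ∑ i, ∑ j, pdv (u k) i x * pdv (fun z => η z i) j x
                        * pdv (fun z => η z j) c x))
          + ε k * ∑ j, (∑ i, pdv (u k) i x * pdv (fun z => η z i) j x) ^ 2))
      atTop
      (𝓝 (∫ x in Ω,
        (((∑ i, pdv (fun z => advf η z i) i x)
            + (∑ i, pdv (fun z => η z i) i x) ^ 2
            - ∑ i, ∑ j, pdv (fun z => η z i) j x * pdv (fun z => η z j) i x)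
          - 2 * (∑ j, ρ x j * (∑ i, ρ x i * pdv (fun z => η z i) j x))
              * (∑ i, pdv (fun z => η z i) i x)
          - 2 * (∑ c, ρ x c
                * ((1 / 2) * (∑ i, ρ x i * pdv (fun z => advf η z i) c x)
                    - ∑ i, ∑ j, ρ x i * pdv (fun z => η z i) j x
                        * pdv (fun z => η z j) c x))
          + ∑ j, (∑ i, ρ x i * pdv (fun z => η z i) j x) ^ 2) ∂lam0)) := by
  have hρ1' : ∀ᵐ x ∂lam0.restrict Ω, ∑ i, ρ x i ^ 2 = 1 :=
    hρ1.mono fun _ hx => Real.sqrt_eq_one.1 hx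
  have hlim := second_inner_variation_allen_cahn_limit_general hΩb
    (W := fun s => (1 - s ^ 2) ^ 2) (by fun_prop) (fun k => (hε k).ne') hu
    hρm.aestronglyMeasurable hρ1'
    (fun φ hφ => hquad φ hφ.continuousOn (exists_norm_le_of_continuous_of_isBounded hφ hΩb))
    hdiscr (hη.of_le (by norm_num)) (contDiff_advf hη (by norm_num))
  simpa only [secondVariationDensity_eq_sum, jacobian, grad, Matrix.of_apply, one_mul, mul_one]
    using hlim

end PaperAC
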